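/- Let μ, ν ∈ 𝓜 with μ ≤_pcd ν, and let h : ℝ → ℝ be the convex hull of the function P_ν − P_μ. Then there exists a unique shadow S of μ in ν, and this shadow satisfies P_S(k) = P_ν(k) − h(k) for all k ∈ ℝ. -/

import Mathlib

open MeasureTheory Set Filter

noncomputable section

/-- `η ∈ 𝓜`: a finite Borel measure on ℝ with finite first moment. -/
def MemM (η : MeasureTheory.Measure ℝ) : Prop :=
  MeasureTheory.IsFiniteMeasure η ∧ MeasureTheory.Integrable (fun x : ℝ => x) η

/-- Convex-decreasing order `≤_cd`. -/
def LeCD (η χ : MeasureTheory.Measure ℝ) : Prop :=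
  ∀ f : ℝ → ℝ, ConvexOn ℝ Set.univ f → Antitone f →
    MeasureTheory.Integrable f η → MeasureTheory.Integrable f χ →
    ∫ x, f x ∂η ≤ ∫ x, f x ∂χ

/-- Positive convex-decreasing order `≤_pcd`. -/
def LePCD (η χ : MeasureTheory.Measure ℝ) : Prop :=
  ∀ f : ℝ → ℝ, (∀ x, 0 ≤ f x) → ConvexOn ℝ Set.univ f → Antitone f →
    MeasureTheory.Integrable f η → MeasureTheory.Integrable f χ →
    ∫ x, f x ∂η ≤ ∫ x, f x ∂χ

/-- Positive convex order `≤_pc`. -/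
def LePC (η χ : MeasureTheory.Measure ℝ) : Prop :=
  ∀ f : ℝ → ℝ, (∀ x, 0 ≤ f x) → ConvexOn ℝ Set.univ f →
    MeasureTheory.Integrable f η → MeasureTheory.Integrable f χ →
    ∫ x, f x ∂η ≤ ∫ x, f x ∂χ

/-- A supermartingale coupling of `η` and `χ`. -/
def IsSupermartingaleCoupling (η χ : MeasureTheory.Measure ℝ)
    (π : MeasureTheory.Measure (ℝ × ℝ)) : Prop :=
  MeasureTheory.IsProbabilityMeasure π ∧
  π.map Prod.fst = η ∧ π.map Prod.snd = χ ∧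
  MeasureTheory.Integrable (fun p : ℝ × ℝ => p.2) π ∧
  ∀ B : Set ℝ, MeasurableSet B →
    ∫ p in B ×ˢ (Set.univ : Set ℝ), (p : ℝ × ℝ).2 ∂π ≤ ∫ x in B, x ∂η

/-- The potential function `P_η(k) = ∫ (k-x)⁺ η(dx)`. -/
def Ppot (η : MeasureTheory.Measure ℝ) (k : ℝ) : ℝ := ∫ x, max (k - x) 0 ∂η

/-- The potential function `C_η(k) = ∫ (x-k)⁺ η(dx)`. -/
def Cpot (η : MeasureTheory.Measure ℝ) (k : ℝ) : ℝ := ∫ x, max (x - k) 0 ∂η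

/-- The left-continuous quantile function `G_η(u) = sup {k | η((-∞,k]) < u}`. -/
def quantile (η : MeasureTheory.Measure ℝ) (u : ℝ) : ℝ :=
  sSup {k : ℝ | (η (Set.Iic k)).toReal < u}

/-- The lift `μ_u = μ|_{(-∞,G(u))} + (u - μ((-∞,G(u)))) δ_{G(u)}`, with `μ_0 = 0`, `μ_1 = μ`. -/
def muU (μ : MeasureTheory.Measure ℝ) (u : ℝ) : MeasureTheory.Measure ℝ :=
  if u ≤ 0 then 0
  else if 1 ≤ u then μ
  else μ.restrict (Set.Iio (quantile μ u)) +
    (ENNReal.ofReal (u - (μ (Set.Iio (quantile μ u))).toReal)) •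
      MeasureTheory.Measure.dirac (quantile μ u)

/-- `S` is a shadow of `μ` in `ν`. -/
def IsShadow (μ ν S : MeasureTheory.Measure ℝ) : Prop :=
  MemM S ∧ LeCD μ S ∧ (∀ A : Set ℝ, MeasurableSet A → S A ≤ ν A) ∧
  ∀ η : MeasureTheory.Measure ℝ, MemM η → LeCD μ η →
    (∀ A : Set ℝ, MeasurableSet A → η A ≤ ν A) → LeCD S η

/-- `h` is the convex hull of `f`. -/
def IsConvexHullFn (f h : ℝ → ℝ) : Prop :=
  ConvexOn ℝ Set.univ h ∧ (∀ x, h x ≤ f x) ∧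
  ∀ g : ℝ → ℝ, ConvexOn ℝ Set.univ g → (∀ x, g x ≤ f x) → ∀ x, g x ≤ h x

/-- The class `𝒟(a,b)`. -/
def MemD (a b : ℝ) (f : ℝ → ℝ) : Prop :=
  (∀ x, 0 ≤ f x) ∧ Monotone f ∧ ConvexOn ℝ Set.univ f ∧
  Filter.Tendsto f Filter.atBot (nhds 0) ∧
  Filter.Tendsto (fun z => f z - (a * z - b)) Filter.atTop (nhds 0)

/-- The topological support of a measure. -/
def msupport (η : MeasureTheory.Measure ℝ) : Set ℝ :=
  {x : ℝ | ∀ U ∈ nhds x, η U ≠ 0}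

theorem integrable_put {η : Measure ℝ} (hη : MemM η) (k : ℝ) :
    Integrable (fun x : ℝ => max (k - x) 0) η := by
  have := hη.1
  exact ((integrable_const k).sub hη.2).sup (integrable_const 0)

theorem convexOn_put (k : ℝ) : ConvexOn ℝ univ (fun x : ℝ => max (k - x) 0) := by
  have h1 : ConvexOn ℝ univ (fun x : ℝ => k - x) :=
    (convexOn_const k convex_univ).sub (concaveOn_id convex_univ)
  exact h1.sup (convexOn_const 0 convex_univ)

theorem antitone_put (k : ℝ) : Antitone (fun x : ℝ => max (k - x) 0) := fun x y hxy =>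
  max_le_max (by linarith) le_rfl

theorem Ppot_nonneg (η : Measure ℝ) (k : ℝ) : 0 ≤ Ppot η k :=
  integral_nonneg fun _ => le_max_right _ _

theorem convexOn_Ppot {η : Measure ℝ} (hη : ∀ k : ℝ, Integrable (fun x : ℝ => max (k - x) 0) η) :
    ConvexOn ℝ univ (Ppot η) := by
  refine ⟨convex_univ, fun x _ y _ a b ha hb hab => ?_⟩
  simp only [Ppot, smul_eq_mul]
  rw [← integral_const_mul, ← integral_const_mul,
    ← integral_add ((hη x).const_mul a) ((hη y).const_mul b)]
  refine integral_mono (hη _) (((hη x).const_mul a).add ((hη y).const_mul b)) fun z => ?_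
  refine max_le ?_ ?_
  · have h1 := mul_le_mul_of_nonneg_left (le_max_left (x - z) 0) ha
    have h2 := mul_le_mul_of_nonneg_left (le_max_left (y - z) 0) hb
    have h3 : z = (a + b) * z := by rw [hab, one_mul]
    linarith
  · have h1 := mul_nonneg ha (le_max_right (x - z) 0)
    have h2 := mul_nonneg hb (le_max_right (y - z) 0)
    linarith

theorem measure_Iic_lt_top_of_integrable_put {η : Measure ℝ}
    (hη : ∀ k : ℝ, Integrable (fun x : ℝ => max (k - x) 0) η) (k : ℝ) : η (Iic k) < ⊤ := by
  refine (measure_mono ?_).trans_lt ((hη (k + 1)).measure_ge_lt_top one_pos)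
  intro x hx
  have : x ≤ k := hx
  simp only [mem_ofPred_eq]
  exact le_max_of_le_left (by linarith)

theorem hasDerivWithinAt_Ppot {η : Measure ℝ}
    (hη : ∀ k : ℝ, Integrable (fun x : ℝ => max (k - x) 0) η) (k : ℝ) :
    HasDerivWithinAt (Ppot η) (η.real (Iic k)) (Ioi k) k := by
  rw [hasDerivWithinAt_iff_tendsto_slope' self_notMem_Ioi,
    ← integral_indicator_one measurableSet_Iic]
  have hslope : slope (Ppot η) k
      = fun y => ∫ x, (y - k)⁻¹ * (max (y - x) 0 - max (k - x) 0) ∂η := funext fun y => by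
    rw [integral_const_mul, integral_sub (hη y) (hη k), slope_def_field, Ppot, Ppot, div_eq_inv_mul]
  rw [hslope]
  refine tendsto_integral_filter_of_dominated_convergence
    ((Iic (k + 1)).indicator 1) ?_ ?_ ?_ ?_
  · exact Eventually.of_forall fun y => (((hη y).sub (hη k)).const_mul _).aestronglyMeasurable
  · filter_upwards [Ioo_mem_nhdsGT (lt_add_one k)] with y hy
    refine Eventually.of_forall fun x => ?_
    have h0 : 0 < y - k := sub_pos.2 hy.1
    have h1 : 0 ≤ max (y - x) 0 - max (k - x) 0 :=
      sub_nonneg.2 (max_le_max (by linarith) le_rfl)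
    have h2 : max (y - x) 0 - max (k - x) 0 ≤ y - k := by
      rcases le_total (y - x) 0 with h | h
      · rw [max_eq_right h]; linarith [le_max_right (k - x) 0]
      · rw [max_eq_left h]; linarith [le_max_left (k - x) 0]
    rw [Real.norm_of_nonneg (mul_nonneg (inv_nonneg.2 h0.le) h1)]
    by_cases hx : x ∈ Iic (k + 1)
    · rw [indicator_of_mem hx, Pi.one_apply, inv_mul_le_iff₀ h0]
      linarith
    · have hx' : k + 1 < x := not_le.1 hx
      rw [indicator_of_notMem hx, max_eq_right, max_eq_right] <;> linarith [hy.2]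
  · exact (integrable_indicator_iff measurableSet_Iic).2
      (integrableOn_const (measure_Iic_lt_top_of_integrable_put hη _).ne)
  · refine Eventually.of_forall fun x => tendsto_const_nhds.congr' ?_
    by_cases hx : x ∈ Iic k
    · filter_upwards [self_mem_nhdsWithin] with y hy
      have hx' : x ≤ k := hx
      have hy' : k < y := hy
      rw [indicator_of_mem hx, Pi.one_apply, max_eq_left, max_eq_left]
      · field_simp [(sub_pos.2 hy').ne']
        ring
      · linarith
      · linarith
    · have hx' : k < x := not_le.1 hx
      filter_upwards [Ioo_mem_nhdsGT hx'] with y hy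
      rw [indicator_of_notMem hx, max_eq_right, max_eq_right] <;> linarith [hy.2]

theorem measure_eq_of_Ppot_eq {η χ : Measure ℝ} (hη : MemM η) (hχ : MemM χ)
    (h : ∀ k, Ppot η k = Ppot χ k) : η = χ := by
  have := hη.1
  have := hχ.1
  refine Measure.ext_of_Iic η χ fun a => ?_
  have h1 := hasDerivWithinAt_Ppot (integrable_put hη) a
  rw [show Ppot η = Ppot χ from funext h] at h1
  have h2 := (uniqueDiffWithinAt_Ioi a).eq_deriv _ h1 (hasDerivWithinAt_Ppot (integrable_put hχ) a)
  exact (measureReal_eq_measureReal_iff).1 h2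

theorem tendsto_Ppot_atBot {η : Measure ℝ}
    (hη : ∀ k : ℝ, Integrable (fun x : ℝ => max (k - x) 0) η) :
    Tendsto (Ppot η) atBot (nhds 0) := by
  have : (0 : ℝ) = ∫ _, (0 : ℝ) ∂η := by simp
  rw [this]
  refine tendsto_integral_filter_of_dominated_convergence (fun x => max (0 - x) 0) ?_ ?_ (hη 0) ?_
  · exact Eventually.of_forall fun y => (hη y).aestronglyMeasurable
  · filter_upwards [eventually_le_atBot 0] with y hy
    refine Eventually.of_forall fun x => ?_
    rw [Real.norm_of_nonneg (le_max_right _ _)]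
    exact max_le_max (by linarith) le_rfl
  · refine Eventually.of_forall fun x => tendsto_const_nhds.congr' ?_
    filter_upwards [eventually_le_atBot x] with y hy
    rw [max_eq_right]; linarith

theorem abs_Ppot_sub_le {η : Measure ℝ} (hη : MemM η) {k : ℝ} (hk : 0 ≤ k) :
    |Ppot η k - k * η.real univ| ≤ ∫ x, |x| ∂η := by
  have := hη.1
  have h1 : Ppot η k - k * η.real univ = ∫ x, (max (k - x) 0 - k) ∂η := by
    rw [integral_sub (integrable_put hη k) (integrable_const k), integral_const, smul_eq_mul,
      mul_comm, Ppot]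
  rw [h1]
  refine (abs_integral_le_integral_abs).trans (integral_mono_of_nonneg
    (Eventually.of_forall fun _ => abs_nonneg _) hη.2.abs (Eventually.of_forall fun x => ?_))
  simp only
  rw [abs_le]
  constructor
  · linarith [le_max_left (k - x) 0, le_abs_self x]
  · rcases le_total (k - x) 0 with h | h
    · rw [max_eq_right h]; linarith [abs_nonneg x]
    · rw [max_eq_left h]; linarith [neg_abs_le x]

theorem Ppot_add {η χ : Measure ℝ} (hη : MemM η) (hχ : MemM χ) (k : ℝ) :
    Ppot (η + χ) k = Ppot η k + Ppot χ k :=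
  integral_add_measure (integrable_put hη k) (integrable_put hχ k)

theorem MemM.mono {η χ : Measure ℝ} (hχ : MemM χ) (h : η ≤ χ) : MemM η :=
  have := hχ.1
  ⟨isFiniteMeasure_of_le χ h, hχ.2.mono_measure h⟩

theorem LeCD.Ppot_le {η χ : Measure ℝ} (hη : MemM η) (hχ : MemM χ) (h : LeCD η χ) (k : ℝ) :
    Ppot η k ≤ Ppot χ k :=
  h _ (convexOn_put k) (antitone_put k) (integrable_put hη k) (integrable_put hχ k)

theorem LeCD.real_univ_eq {η χ : Measure ℝ} (hη : MemM η) (hχ : MemM χ) (h : LeCD η χ) :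
    η.real univ = χ.real univ := by
  have := hη.1
  have := hχ.1
  have h1 := h (fun _ => 1) (convexOn_const 1 convex_univ) antitone_const
    (integrable_const _) (integrable_const _)
  have h2 := h (fun _ => -1) (convexOn_const (-1) convex_univ) antitone_const
    (integrable_const _) (integrable_const _)
  simp only [integral_const, smul_eq_mul] at h1 h2
  linarith

theorem LePCD.Ppot_le {η χ : Measure ℝ} (hη : MemM η) (hχ : MemM χ) (h : LePCD η χ) (k : ℝ) :
    Ppot η k ≤ Ppot χ k :=
  h _ (fun _ => le_max_right _ _) (convexOn_put k) (antitone_put k)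
    (integrable_put hη k) (integrable_put hχ k)

theorem LePCD.real_univ_le {η χ : Measure ℝ} (hη : MemM η) (hχ : MemM χ) (h : LePCD η χ) :
    η.real univ ≤ χ.real univ := by
  have := hη.1
  have := hχ.1
  have h1 := h (fun _ => 1) (fun _ => zero_le_one) (convexOn_const 1 convex_univ) antitone_const
    (integrable_const _) (integrable_const _)
  simpa using h1

theorem ConvexOn.continuous_of_univ {f : ℝ → ℝ} (hf : ConvexOn ℝ univ f) : Continuous f :=
  continuousOn_univ.1 (hf.continuousOn isOpen_univ)

theorem ConvexOn.hasDerivWithinAt_rightDeriv {f : ℝ → ℝ} (hf : ConvexOn ℝ univ f) (x : ℝ) :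
    HasDerivWithinAt f (derivWithin f (Ioi x) x) (Ioi x) x :=
  hf.hasDerivWithinAt_rightDeriv_of_mem_interior (by simp)

theorem ConvexOn.monotone_rightDeriv {f : ℝ → ℝ} (hf : ConvexOn ℝ univ f) :
    Monotone fun x => derivWithin f (Ioi x) x := by
  simpa [monotoneOn_univ] using hf.monotoneOn_rightDeriv

theorem ConvexOn.rightDeriv_le_slope_of_lt {f : ℝ → ℝ} (hf : ConvexOn ℝ univ f) {x y : ℝ}
    (hxy : x < y) : derivWithin f (Ioi x) x ≤ slope f x y :=
  hf.rightDeriv_le_slope_of_mem_interior (by simp) (mem_univ y) hxy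

theorem ConvexOn.slope_le_rightDeriv_of_lt {f : ℝ → ℝ} (hf : ConvexOn ℝ univ f) {x y : ℝ}
    (hxy : x < y) : slope f x y ≤ derivWithin f (Ioi y) y :=
  (hf.slope_le_leftDeriv_of_mem_interior (mem_univ x) (by simp) hxy).trans
    (hf.leftDeriv_le_rightDeriv_of_mem_interior (by simp))

theorem ConvexOn.continuousWithinAt_rightDeriv {f : ℝ → ℝ} (hf : ConvexOn ℝ univ f) (x : ℝ) :
    ContinuousWithinAt (fun y => derivWithin f (Ioi y) y) (Ici x) x := by
  refine tendsto_order.2 ⟨fun c hc => ?_, fun c hc => ?_⟩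
  · filter_upwards [self_mem_nhdsWithin] with y hy
    exact hc.trans_le (hf.monotone_rightDeriv hy)
  · have h1 := (hasDerivWithinAt_iff_tendsto_slope' self_notMem_Ioi).1
      (hf.hasDerivWithinAt_rightDeriv x)
    obtain ⟨z, hzc, hxz⟩ := ((h1.eventually_lt_const hc).and self_mem_nhdsWithin).exists
    have hxz' : x < z := hxz
    have h2 : ContinuousAt (fun y => slope f y z) x := by
      simp only [slope_def_field]
      have := hf.continuous_of_univ.continuousAt (x := x)
      exact (continuousAt_const.sub this).div (continuousAt_const.sub continuousAt_id)
        (sub_ne_zero.2 hxz'.ne')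
    refine nhdsWithin_le_nhds ?_
    filter_upwards [h2.eventually_lt_const hzc, Iio_mem_nhds hxz'] with y hy hyz
    exact (hf.rightDeriv_le_slope_of_lt hyz).trans_lt hy

/-- The right derivative of a convex function, as a Stieltjes function. -/
def ConvexOn.rightDerivStieltjes {f : ℝ → ℝ} (hf : ConvexOn ℝ univ f) : StieltjesFunction ℝ where
  toFun x := derivWithin f (Ioi x) x
  mono' := hf.monotone_rightDeriv
  right_continuous' := hf.continuousWithinAt_rightDeriv

theorem ConvexOn.rightDeriv_nonneg_of_tendsto_atBot {f : ℝ → ℝ} (hf : ConvexOn ℝ univ f)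
    (h0 : Tendsto f atBot (nhds 0)) (x : ℝ) : 0 ≤ derivWithin f (Ioi x) x := by
  have h1 : Tendsto (fun y => slope f y x) atBot (nhds 0) := by
    simp only [slope_def_field]
    refine (tendsto_const_nhds.sub h0).div_atTop ?_
    exact tendsto_atTop_add_const_left atBot x tendsto_neg_atBot_atTop
  refine le_of_tendsto h1 ?_
  filter_upwards [eventually_lt_atBot x] with y hy
  exact hf.slope_le_rightDeriv_of_lt hy

theorem ConvexOn.tendsto_rightDeriv_atBot {f : ℝ → ℝ} (hf : ConvexOn ℝ univ f)
    (h0 : Tendsto f atBot (nhds 0)) :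
    Tendsto (fun x => derivWithin f (Ioi x) x) atBot (nhds 0) := by
  have h1 : Tendsto (fun x => f (x + 1) - f x) atBot (nhds 0) := by
    simpa using (h0.comp (tendsto_atBot_add_const_right atBot 1 tendsto_id)).sub h0
  refine squeeze_zero (hf.rightDeriv_nonneg_of_tendsto_atBot h0) (fun x => ?_) h1
  simpa [slope_def_field] using hf.rightDeriv_le_slope_of_lt (lt_add_one x)

theorem ConvexOn.rightDerivStieltjes_measure_Iic {f : ℝ → ℝ} (hf : ConvexOn ℝ univ f)
    (h0 : Tendsto f atBot (nhds 0)) (x : ℝ) :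
    hf.rightDerivStieltjes.measure (Iic x) = ENNReal.ofReal (derivWithin f (Ioi x) x) := by
  rw [StieltjesFunction.measure_Iic _ (l := 0) (hf.tendsto_rightDeriv_atBot h0), sub_zero]
  rfl

theorem eq_of_hasDerivWithinAt_Ioi_of_tendsto_atBot {f g D : ℝ → ℝ}
    (hfc : Continuous f) (hgc : Continuous g)
    (hf : ∀ x, HasDerivWithinAt f (D x) (Ioi x) x) (hg : ∀ x, HasDerivWithinAt g (D x) (Ioi x) x)
    (hf0 : Tendsto f atBot (nhds 0)) (hg0 : Tendsto g atBot (nhds 0)) : f = g := by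
  funext x
  have h1 : Tendsto (fun a => f a - g a) atBot (nhds 0) := by simpa using hf0.sub hg0
  have h2 : Tendsto (fun a => f a - g a) atBot (nhds (f x - g x)) := by
    refine tendsto_const_nhds.congr' ?_
    filter_upwards [eventually_le_atBot x] with a ha
    refine constant_of_has_deriv_right_zero (f := fun t => f t - g t) (b := x)
      (hfc.sub hgc).continuousOn (fun t _ => ?_) x (right_mem_Icc.2 ha)
    have := ((hf t).fun_sub (hg t)).Ici_of_Ioi
    rwa [sub_self] at this
  exact sub_eq_zero.1 (tendsto_nhds_unique h2 h1)

theorem convexOn_sub_of_isConvexHullFn {g₁ g₂ h : ℝ → ℝ} (hg₁ : ConvexOn ℝ univ g₁)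
    (hg₂ : ConvexOn ℝ univ g₂) (hh : IsConvexHullFn (fun k => g₁ k - g₂ k) h) :
    ConvexOn ℝ univ (fun k => g₁ k - h k) := by
  obtain ⟨hconv, hle, hmax⟩ := hh
  have c₁ := hg₁.continuous_of_univ
  have c₂ := hg₂.continuous_of_univ
  have ch := hconv.continuous_of_univ
  refine LinearOrder.convexOn_of_lt convex_univ fun x _ y _ hxy a b ha hb hab => ?_
  simp only [smul_eq_mul]
  set s := ((g₁ y - h y) - (g₁ x - h x)) / (y - x) with hs
  have hs' : s * (y - x) = (g₁ y - h y) - (g₁ x - h x) :=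
    div_mul_cancel₀ _ (sub_ne_zero.2 hxy.ne')
  set ψ : ℝ → ℝ := fun t => g₁ t - h t - ((g₁ x - h x) + s * (t - x)) with hψ
  have cψ : Continuous ψ := by fun_prop
  obtain ⟨z₀, hz₀, hz₀max⟩ := isCompact_Icc.exists_isMaxOn (nonempty_Icc.2 hxy.le) cψ.continuousOn
  have hM : ψ z₀ ≤ 0 := by
    by_contra! hpos
    obtain ⟨z, ⟨hz, hzM⟩, hzmin⟩ := (isCompact_Icc.inter_right
      (isClosed_singleton.preimage cψ) : IsCompact (Icc x y ∩ ψ ⁻¹' {ψ z₀})).exists_isLeast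
      ⟨z₀, hz₀, rfl⟩
    have hzM' : ψ z = ψ z₀ := hzM
    have hxz : x < z := lt_of_le_of_ne hz.1 (by rintro rfl; simp [hψ] at hzM' hpos; linarith)
    have hzy : z < y := lt_of_le_of_ne hz.2 (by rintro rfl; simp only [hψ] at hzM' hpos; linarith)
    rcases (hle z).eq_or_lt with heq | hlt
    · have h1 := hg₂.secant_mono_aux1 (mem_univ x) (mem_univ y) hxz hzy
      have hx := hle x
      have hy := hle y
      simp only [hψ] at hzM' hpos
      have h2 : (y - x) * (g₁ x - h x + s * (z - x)) < (y - x) * g₂ z :=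
        mul_lt_mul_of_pos_left (by linarith) (sub_pos.2 hxy)
      have h3 : (y - z) * g₂ x ≤ (y - z) * (g₁ x - h x) :=
        mul_le_mul_of_nonneg_left (by linarith) (sub_pos.2 hzy).le
      have h4 : (z - x) * g₂ y ≤ (z - x) * (g₁ y - h y) :=
        mul_le_mul_of_nonneg_left (by linarith) (sub_pos.2 hxz).le
      have h5 : (y - x) * (g₁ x - h x + s * (z - x))
          = (y - z) * (g₁ x - h x) + (z - x) * (g₁ y - h y) := by
        linear_combination (z - x) * hs'
      linarith
    · obtain ⟨c, hc₁, hc₂⟩ := exists_between hlt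
      have hev : ∀ᶠ t in nhds z, h t < c ∧ c < g₁ t - g₂ t :=
        (ch.continuousAt.eventually_lt_const hc₁).and
          ((c₁.sub c₂).continuousAt.eventually_const_lt hc₂)
      obtain ⟨ε, hε, hball⟩ := Metric.eventually_nhds_iff.1 hev
      obtain ⟨δ, hδ, hδε, hδx, hδy⟩ : ∃ δ > 0, δ < ε ∧ δ < z - x ∧ δ < y - z := by
        obtain ⟨δ, h1, h2⟩ := exists_between (lt_min hε (lt_min (sub_pos.2 hxz) (sub_pos.2 hzy)))
        simp only [lt_min_iff] at h2
        exact ⟨δ, h1, h2⟩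
      have hnear : ∀ t, z - δ ≤ t → t ≤ z + δ → h t < c ∧ c < g₁ t - g₂ t := fun t h1 h2 =>
        hball (by rw [Real.dist_eq, abs_lt]; constructor <;> linarith)
      set β := (h (z + δ) - h (z - δ)) / (2 * δ) with hβ
      have hβ' : β * (2 * δ) = h (z + δ) - h (z - δ) := div_mul_cancel₀ _ (by positivity)
      set L : ℝ → ℝ := fun t => (h (z + δ) + h (z - δ)) / 2 + β * (t - z) with hL
      have hLconv : ConvexOn ℝ univ L := by
        refine ⟨convex_univ, fun p _ q _ a b _ _ hab => le_of_eq ?_⟩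
        simp only [hL, smul_eq_mul]
        linear_combination (β * z - (h (z + δ) + h (z - δ)) / 2) * hab
      have hGle : ∀ t, max (h t) (L t) ≤ g₁ t - g₂ t := fun t => by
        refine max_le (hle t) ?_
        rcases lt_or_ge t (z - δ) with ht | ht
        · refine le_trans ?_ (hle t)
          have h1 := hconv.secant_mono_aux1 (mem_univ t) (mem_univ (z + δ)) ht (by linarith)
          have h2 : 0 < 2 * δ := by positivity
          refine le_of_mul_le_mul_left ?_ h2
          simp only [hL]
          nlinarith
        rcases lt_or_ge (z + δ) t with ht' | ht'
        · refine le_trans ?_ (hle t)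
          have h1 := hconv.secant_mono_aux1 (mem_univ (z - δ)) (mem_univ t) (by linarith) ht'
          have h2 : 0 < 2 * δ := by positivity
          refine le_of_mul_le_mul_left ?_ h2
          simp only [hL]
          nlinarith
        · refine le_trans ?_ (hnear t ht ht').2.le
          have h1 := (hnear (z - δ) (by linarith) (by linarith)).1
          have h2 := (hnear (z + δ) (by linarith) (by linarith)).1
          have h3 : 0 < 2 * δ := by positivity
          refine le_of_mul_le_mul_left ?_ h3
          have h4 : 2 * δ * L t = (z + δ - t) * h (z - δ) + (t - (z - δ)) * h (z + δ) := by
            simp only [hL]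
            linear_combination (t - z) * hβ'
          have h5 := mul_le_mul_of_nonneg_left h1.le (sub_nonneg.2 ht')
          have h6 := mul_le_mul_of_nonneg_left h2.le (sub_nonneg.2 ht)
          linarith
      have hLz := (le_max_right _ _).trans (hmax _ (hconv.sup hLconv) hGle z)
      have hg₁z := hg₁.secant_mono_aux1 (mem_univ (z - δ)) (mem_univ (z + δ))
        (show z - δ < z by linarith) (show z < z + δ by linarith)
      have hg₁z' : 2 * g₁ z ≤ g₁ (z - δ) + g₁ (z + δ) := by
        refine le_of_mul_le_mul_left ?_ hδ
        linarith
      have hup : ψ (z + δ) ≤ ψ z₀ := hz₀max ⟨by linarith, by linarith⟩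
      have hdown : ψ (z - δ) ≤ ψ z₀ := hz₀max ⟨by linarith, by linarith⟩
      have hmid : 2 * ψ z ≤ ψ (z - δ) + ψ (z + δ) := by
        simp only [hL, sub_self, mul_zero, add_zero] at hLz
        simp only [hψ]
        linarith
      have heq : ψ (z - δ) = ψ z₀ := le_antisymm hdown (by linarith)
      have := hzmin ⟨⟨by linarith, by linarith⟩, heq⟩
      linarith
  have hmem : a * x + b * y ∈ Icc x y :=
    convex_Icc x y (left_mem_Icc.2 hxy.le) (right_mem_Icc.2 hxy.le) ha.le hb.le hab
  have hfin : ψ (a * x + b * y) ≤ 0 := (hz₀max hmem).trans hM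
  simp only [hψ] at hfin
  have h1 : (g₁ x - h x) + s * (a * x + b * y - x)
      = a * (g₁ x - h x) + b * (g₁ y - h y) := by
    linear_combination b * hs' + (s * x - (g₁ x - h x)) * hab
  linarith

theorem ConvexOn.Ppot_rightDerivStieltjes_measure {f : ℝ → ℝ} (hf : ConvexOn ℝ univ f)
    (h0 : Tendsto f atBot (nhds 0))
    (hint : ∀ k : ℝ, Integrable (fun x : ℝ => max (k - x) 0) hf.rightDerivStieltjes.measure) :
    Ppot hf.rightDerivStieltjes.measure = f := by
  refine eq_of_hasDerivWithinAt_Ioi_of_tendsto_atBot (convexOn_Ppot hint).continuous_of_univ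
    hf.continuous_of_univ (fun x => ?_) hf.hasDerivWithinAt_rightDeriv (tendsto_Ppot_atBot hint) h0
  have h1 := hasDerivWithinAt_Ppot hint x
  rwa [measureReal_def, hf.rightDerivStieltjes_measure_Iic h0,
    ENNReal.toReal_ofReal (hf.rightDeriv_nonneg_of_tendsto_atBot h0 x)] at h1

theorem ConvexOn.exists_measure_Ppot_eq {f : ℝ → ℝ} (hf : ConvexOn ℝ univ f) {N : ℝ}
    (hN : ∀ y ≤ N, f y = 0) :
    ∃ m : Measure ℝ, SFinite m ∧ (∀ k : ℝ, Integrable (fun x : ℝ => max (k - x) 0) m) ∧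
      Ppot m = f := by
  have h0 : Tendsto f atBot (nhds 0) := tendsto_const_nhds.congr' <| by
    filter_upwards [eventually_le_atBot N] with y hy using (hN y hy).symm
  have hD : derivWithin f (Ioi (N - 1)) (N - 1) ≤ 0 := by
    have := hf.rightDeriv_le_slope_of_lt (sub_one_lt N)
    rwa [slope_def_field, hN N le_rfl, hN _ (sub_one_lt N).le, sub_zero, zero_div] at this
  have hnull : hf.rightDerivStieltjes.measure (Iic (N - 1)) = 0 := by
    rw [hf.rightDerivStieltjes_measure_Iic h0, ENNReal.ofReal_of_nonpos hD]
  have hae : ∀ᵐ x ∂hf.rightDerivStieltjes.measure, N - 1 < x := by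
    rw [ae_iff]
    simpa [Iic] using hnull
  have hint : ∀ k : ℝ, Integrable (fun x : ℝ => max (k - x) 0) hf.rightDerivStieltjes.measure := by
    intro k
    have hb : Integrable ((Iic k).indicator fun _ => k - N + 1) hf.rightDerivStieltjes.measure := by
      refine (integrable_indicator_iff measurableSet_Iic).2 (integrableOn_const ?_)
      rw [hf.rightDerivStieltjes_measure_Iic h0]
      exact ENNReal.ofReal_ne_top
    refine hb.mono' (by fun_prop) ?_
    filter_upwards [hae] with x hx
    rw [Real.norm_of_nonneg (le_max_right _ _)]
    by_cases hxk : x ∈ Iic k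
    · have : x ≤ k := hxk
      rw [indicator_of_mem hxk, max_eq_left] <;> linarith
    · have : k < x := not_le.1 hxk
      rw [indicator_of_notMem hxk, max_eq_right]; linarith
  exact ⟨_, inferInstance, hint, hf.Ppot_rightDerivStieltjes_measure h0 hint⟩

theorem lintegral_ofReal_Ppot_neg {η m : Measure ℝ} [SFinite η] [SFinite m]
    (hη : ∀ k : ℝ, Integrable (fun x : ℝ => max (k - x) 0) η)
    (hm : ∀ k : ℝ, Integrable (fun x : ℝ => max (k - x) 0) m) :
    ∫⁻ x, ENNReal.ofReal (Ppot m (-x)) ∂η = ∫⁻ z, ENNReal.ofReal (Ppot η (-z)) ∂m := by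
  have h1 : ∀ {ρ : Measure ℝ}, (∀ k : ℝ, Integrable (fun x : ℝ => max (k - x) 0) ρ) →
      ∀ k, ENNReal.ofReal (Ppot ρ k) = ∫⁻ x, ENNReal.ofReal (max (k - x) 0) ∂ρ :=
    fun hρ k => ofReal_integral_eq_lintegral_ofReal (hρ k)
      (Eventually.of_forall fun _ => le_max_right _ _)
  simp_rw [h1 hη, h1 hm]
  rw [lintegral_lintegral_swap (by fun_prop)]
  simp_rw [sub_eq_add_neg, add_comm]

theorem integral_le_of_Ppot_le {η χ : Measure ℝ} (hη : MemM η) (hχ : MemM χ)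
    (hP : ∀ k, Ppot η k ≤ Ppot χ k) {g : ℝ → ℝ} (hg : ConvexOn ℝ univ g) (hg0 : ∀ x, 0 ≤ g x)
    {N : ℝ} (hN : ∀ x, N ≤ x → g x = 0) (hgη : Integrable g η) (hgχ : Integrable g χ) :
    ∫ x, g x ∂η ≤ ∫ x, g x ∂χ := by
  have := hη.1
  have := hχ.1
  have hconv : ConvexOn ℝ univ (fun y => g (-y)) :=
    hg.comp_linearMap (-LinearMap.id)
  obtain ⟨m, hm, hint, hPm⟩ := hconv.exists_measure_Ppot_eq (N := -N)
    fun y hy => hN _ (by linarith)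
  have hgm : ∀ x, g x = Ppot m (-x) := fun x => by simp [hPm]
  have h1 : ∫⁻ x, ENNReal.ofReal (g x) ∂η ≤ ∫⁻ x, ENNReal.ofReal (g x) ∂χ := by
    simp_rw [hgm]
    rw [lintegral_ofReal_Ppot_neg (integrable_put hη) hint,
      lintegral_ofReal_Ppot_neg (integrable_put hχ) hint]
    exact lintegral_mono fun z => ENNReal.ofReal_le_ofReal (hP _)
  rw [← ofReal_integral_eq_lintegral_ofReal hgη (Eventually.of_forall hg0),
    ← ofReal_integral_eq_lintegral_ofReal hgχ (Eventually.of_forall hg0)] at h1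
  exact (ENNReal.ofReal_le_ofReal_iff (integral_nonneg hg0)).1 h1

theorem tendsto_integral_max_antitone {η : Measure ℝ} [IsFiniteMeasure η] {f : ℝ → ℝ}
    (hf : Antitone f) (hint : Integrable f η) :
    Tendsto (fun n : ℕ => ∫ x, max (f x) (f n) ∂η) atTop (nhds (∫ x, f x ∂η)) := by
  refine tendsto_integral_of_dominated_convergence (fun x => |f x| + |f 0|)
    (fun n => (hint.sup (integrable_const _)).aestronglyMeasurable)
    (hint.abs.add (integrable_const _)) (fun n => Eventually.of_forall fun x => ?_)
    (Eventually.of_forall fun x => tendsto_const_nhds.congr' ?_)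
  · have h1 : f n ≤ f 0 := hf (Nat.cast_nonneg n)
    rw [Real.norm_eq_abs, abs_le]
    constructor
    · linarith [le_max_left (f x) (f n), neg_abs_le (f x), abs_nonneg (f 0)]
    · refine max_le ?_ ?_
      · linarith [le_abs_self (f x), abs_nonneg (f 0)]
      · linarith [le_abs_self (f 0), abs_nonneg (f x)]
  · filter_upwards [eventually_ge_atTop ⌈x⌉₊] with n hn
    exact (max_eq_left (hf (Nat.ceil_le.1 hn))).symm

theorem leCD_of_Ppot_le {η χ : Measure ℝ} (hη : MemM η) (hχ : MemM χ)
    (huniv : η.real univ = χ.real univ) (hP : ∀ k, Ppot η k ≤ Ppot χ k) : LeCD η χ := by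
  intro f hf hanti hfη hfχ
  have := hη.1
  have := hχ.1
  refine le_of_tendsto_of_tendsto' (tendsto_integral_max_antitone hanti hfη)
    (tendsto_integral_max_antitone hanti hfχ) fun n => ?_
  have hmη : Integrable (fun x => max (f x) (f n)) η := hfη.sup (integrable_const _)
  have hmχ : Integrable (fun x => max (f x) (f n)) χ := hfχ.sup (integrable_const _)
  have hconv : ConvexOn ℝ univ fun x => max (f x) (f n) - f n :=
    (hf.sup (convexOn_const (f n) convex_univ)).sub (concaveOn_const (f n) convex_univ)
  have h1 := integral_le_of_Ppot_le hη hχ hP hconv (fun x => sub_nonneg.2 (le_max_right _ _))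
    (N := n) (fun x hx => by rw [max_eq_right (hanti hx), sub_self])
    (hmη.sub (integrable_const _)) (hmχ.sub (integrable_const _))
  rw [integral_sub hmη (integrable_const _), integral_sub hmχ (integrable_const _)] at h1
  simp only [integral_const, smul_eq_mul, huniv] at h1
  linarith

theorem exists_measure_le_Ppot_eq {ν : Measure ℝ} (hν : MemM ν) {f g : ℝ → ℝ}
    (hf : ConvexOn ℝ univ f) (hg : ConvexOn ℝ univ g)
    (hf0 : Tendsto f atBot (nhds 0)) (hg0 : Tendsto g atBot (nhds 0))
    (hfg : ∀ k, f k + g k = Ppot ν k) : ∃ S ≤ ν, Ppot S = f := by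
  have := hν.1
  have hadd : hf.rightDerivStieltjes.measure + hg.rightDerivStieltjes.measure = ν := by
    refine (Measure.ext_of_Iic ν _ fun a => ?_).symm
    have h1 := (hf.hasDerivWithinAt_rightDeriv a).fun_add (hg.hasDerivWithinAt_rightDeriv a)
    simp_rw [hfg] at h1
    have h2 := (uniqueDiffWithinAt_Ioi a).eq_deriv _ h1
      (hasDerivWithinAt_Ppot (integrable_put hν) a)
    rw [Measure.add_apply, hf.rightDerivStieltjes_measure_Iic hf0,
      hg.rightDerivStieltjes_measure_Iic hg0,
      ← ENNReal.ofReal_add (hf.rightDeriv_nonneg_of_tendsto_atBot hf0 a)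
        (hg.rightDeriv_nonneg_of_tendsto_atBot hg0 a), h2, ofReal_measureReal]
  have hle : hf.rightDerivStieltjes.measure ≤ ν :=
    (Measure.le_add_right le_rfl).trans_eq hadd
  exact ⟨_, hle, hf.Ppot_rightDerivStieltjes_measure hf0 (integrable_put (hν.mono hle))⟩

theorem real_univ_eq_of_Ppot_le {μ S : Measure ℝ} (hμ : MemM μ) (hS : MemM S)
    (hμS : ∀ k, Ppot μ k ≤ Ppot S k) {C : ℝ}
    (hC : ∀ k, 0 ≤ k → Ppot S k ≤ k * μ.real univ + C) : μ.real univ = S.real univ := by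
  have key : ∀ {p q B : ℝ}, (∀ k, 0 ≤ k → k * p ≤ k * q + B) → p ≤ q := by
    intro p q B hB
    by_contra! hlt
    have h1 := hB ((|B| + 1) / (p - q)) (div_nonneg (by positivity) (sub_pos.2 hlt).le)
    have h2 : (|B| + 1) / (p - q) * (p - q) = |B| + 1 := div_mul_cancel₀ _ (sub_pos.2 hlt).ne'
    linarith [le_abs_self B]
  refine le_antisymm (key (B := ∫ x, |x| ∂μ + ∫ x, |x| ∂S) fun k hk => ?_)
    (key (B := ∫ x, |x| ∂S + C) fun k hk => ?_)
  · have h1 := abs_le.1 (abs_Ppot_sub_le hμ hk)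
    have h2 := abs_le.1 (abs_Ppot_sub_le hS hk)
    linarith [hμS k, h1.1, h2.2]
  · have h1 := abs_le.1 (abs_Ppot_sub_le hS hk)
    linarith [hC k hk, h1.1]

/-- Theorem 3.9: the shadow of `μ` in `ν` exists, is unique, and its potential is
`P_{S^ν(μ)} = P_ν - (P_ν - P_μ)^c`. -/
theorem shadow_exists_unique_potential
    (μ ν : MeasureTheory.Measure ℝ) (hμ : MemM μ) (hν : MemM ν)
    (hpcd : LePCD μ ν)
    (h : ℝ → ℝ) (hh : IsConvexHullFn (fun k => Ppot ν k - Ppot μ k) h) :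
    (∃! S : MeasureTheory.Measure ℝ, IsShadow μ ν S) ∧
    (∀ S : MeasureTheory.Measure ℝ, IsShadow μ ν S →
      ∀ k : ℝ, Ppot S k = Ppot ν k - h k) := by
  have hPμν := hpcd.Ppot_le hμ hν
  have hh0 : ∀ k, 0 ≤ h k :=
    hh.2.2 (fun _ => 0) (convexOn_const 0 convex_univ) fun k => sub_nonneg.2 (hPμν k)
  have hhν : ∀ k, h k ≤ Ppot ν k - Ppot μ k := hh.2.1
  have hν0 := tendsto_Ppot_atBot (integrable_put hν)
  have hhbot : Tendsto h atBot (nhds 0) :=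
    squeeze_zero hh0 (fun k => (hhν k).trans (sub_le_self _ (Ppot_nonneg μ k))) hν0
  have hsub := convexOn_sub_of_isConvexHullFn (convexOn_Ppot (integrable_put hν))
    (convexOn_Ppot (integrable_put hμ)) hh
  obtain ⟨S, hSν, hPS⟩ := exists_measure_le_Ppot_eq hν hsub hh.1
    (by simpa using hν0.sub hhbot) hhbot fun k => sub_add_cancel _ _
  have hPS' : ∀ k, Ppot S k = Ppot ν k - h k := congrFun hPS
  have hS : MemM S := hν.mono hSν
  have hPμS : ∀ k, Ppot μ k ≤ Ppot S k := fun k => by linarith [hPS' k, hhν k]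
  have hmass : μ.real univ = S.real univ := by
    set a := ν.real univ - μ.real univ with ha
    have ha0 : 0 ≤ a := sub_nonneg.2 (hpcd.real_univ_le hμ hν)
    set c := ∫ x, |x| ∂ν + ∫ x, |x| ∂μ with hc
    have hline : ∀ k, a * k - c ≤ h k := by
      refine hh.2.2 _ ?_ fun k => ?_
      · refine ⟨convex_univ, fun p _ q _ s t _ _ hst => le_of_eq ?_⟩
        simp only [smul_eq_mul]
        linear_combination c * hst
      · rcases le_total 0 k with hk | hk
        · have h1 := abs_le.1 (abs_Ppot_sub_le hν hk)
          have h2 := abs_le.1 (abs_Ppot_sub_le hμ hk)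
          have h3 : a * k = k * ν.real univ - k * μ.real univ := by rw [ha]; ring
          linarith [h1.1, h2.2]
        · have h1 : a * k ≤ 0 := mul_nonpos_of_nonneg_of_nonpos ha0 hk
          have h2 : 0 ≤ ∫ x, |x| ∂ν := integral_nonneg fun _ => abs_nonneg _
          have h3 : 0 ≤ ∫ x, |x| ∂μ := integral_nonneg fun _ => abs_nonneg _
          linarith [hPμν k]
    refine real_univ_eq_of_Ppot_le hμ hS hPμS (C := ∫ x, |x| ∂ν + c) fun k hk => ?_
    have h1 := (abs_le.1 (abs_Ppot_sub_le hν hk)).2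
    have h2 : a * k = k * ν.real univ - k * μ.real univ := by rw [ha]; ring
    linarith [hline k, hPS' k]
  have hshadow : IsShadow μ ν S := by
    refine ⟨hS, leCD_of_Ppot_le hμ hS hmass hPμS, fun A _ => hSν A, fun η hη hμη hην => ?_⟩
    have hle : η ≤ ν := Measure.le_iff.2 hην
    have := hη.1
    have hadd : ν - η + η = ν := Measure.sub_add_cancel_of_le hle
    have hres : MemM (ν - η) := hν.mono Measure.sub_le
    have hPadd : ∀ k, Ppot ν k = Ppot (ν - η) k + Ppot η k := fun k => by
      rw [← Ppot_add hres hη, hadd]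
    refine leCD_of_Ppot_le hS hη (hmass.symm.trans (hμη.real_univ_eq hμ hη)) fun k => ?_
    have := hh.2.2 (Ppot (ν - η)) (convexOn_Ppot (integrable_put hres))
      (fun x => by linarith [hPadd x, hμη.Ppot_le hμ hη x]) k
    linarith [hPadd k, hPS' k]
  have huniq : ∀ T, IsShadow μ ν T → T = S := fun T hT =>
    measure_eq_of_Ppot_eq hT.1 hS fun k => le_antisymm
      ((hT.2.2.2 S hS hshadow.2.1 hshadow.2.2.1).Ppot_le hT.1 hS k)
      ((hshadow.2.2.2 T hT.1 hT.2.1 hT.2.2.1).Ppot_le hS hT.1 k)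
  exact ⟨⟨S, hshadow, huniq⟩, fun T hT => huniq T hT ▸ hPS'⟩
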